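/- Let f : ℝⁿ → ℝ be continuous and positive-valued with epigraph L, and let K ⊆ ℝⁿ × ℝ be a nonempty closed set disjoint from L containing a point (x₀,y₀) with y₀ ≤ 0. Then the upper equidistant function G⁺ : ℝⁿ → ℝ is upper semi-continuous and the lower equidistant function G⁻ : ℝⁿ → ℝ is lower semi-continuous. -/

import Mathlib

open Metric Set

noncomputable section

/-- `ℝⁿ × ℝ` with the Euclidean (ℓ²) metric. -/
abbrev EucProd (n : ℕ) := WithLp 2 (EuclideanSpace ℝ (Fin n) × ℝ)

/-- The point of `ℝⁿ × ℝ` with first component `x` and last coordinate `y`. -/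
def pt {n : ℕ} (x : EuclideanSpace ℝ (Fin n)) (y : ℝ) : EucProd n :=
  (WithLp.equiv 2 (EuclideanSpace ℝ (Fin n) × ℝ)).symm (x, y)

/-- The epigraph of `f : ℝⁿ → ℝ`, viewed as a subset of `ℝⁿ × ℝ`. -/
def epigraph {n : ℕ} (f : EuclideanSpace ℝ (Fin n) → ℝ) : Set (EucProd n) :=
  {p | f ((WithLp.equiv 2 (EuclideanSpace ℝ (Fin n) × ℝ)) p).1 ≤
      ((WithLp.equiv 2 (EuclideanSpace ℝ (Fin n) × ℝ)) p).2}

/-- The upper equidistant function `G⁺` associated with the focal sets `K` and `L`: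
`G⁺(x) = sup {y | d((x,y),K) = d((x,y),L)}`. -/
def Gplus {n : ℕ} (K L : Set (EucProd n)) (x : EuclideanSpace ℝ (Fin n)) : ℝ :=
  sSup {y : ℝ | Metric.infDist (pt x y) K = Metric.infDist (pt x y) L}

/-- The lower equidistant function `G⁻` associated with the focal sets `K` and `L`:
`G⁻(x) = inf {y | d((x,y),K) = d((x,y),L)}`. -/
def Gminus {n : ℕ} (K L : Set (EucProd n)) (x : EuclideanSpace ℝ (Fin n)) : ℝ :=
  sInf {y : ℝ | Metric.infDist (pt x y) K = Metric.infDist (pt x y) L}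

/-!
Over each point of `ℝⁿ` the heights equidistant from `K` and `L` form the fibre of a closed subset
of `ℝⁿ × ℝ`. Let `(x₀, y₀) ∈ K` with `y₀ < f`. If `y ≥ f x` then `(x, y)` lies in `L` and off `K`,
hence is strictly closer to `L`. If `y` is very negative then `(x, y)` is strictly closer to `K`:
the points of `L` at bounded horizontal distance have height at least some `m > y₀`, so compared
with `(x₀, y₀)` they are farther vertically by at least `2 (m - y₀) (y₀ - y)` in squared distance,
which outweighs the squared horizontal distance to `x₀`; the other points of `L` are horizontally
farther than `x₀`. Both thresholds are locally uniform in `x`, so the fibres are locally uniformly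
bounded, and they are nonempty by the intermediate value theorem. Compactness of intervals then
gives the semicontinuity of their extrema.
-/

open Filter Topology WithLp

section Fibers

variable {X α : Type*} [TopologicalSpace X] [ConditionallyCompleteLinearOrder α]
  [TopologicalSpace α] [OrderTopology α] {S : X → Set α}

theorem upperSemicontinuous_sSup_of_isClosed_graph
    (hclosed : IsClosed {p : X × α | p.2 ∈ S p.1}) (hne : ∀ x, (S x).Nonempty)
    (hbdd : ∀ a, ∃ M, ∀ᶠ x in 𝓝 a, M ∈ upperBounds (S x)) :
    UpperSemicontinuous fun x => sSup (S x) := by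
  intro a c hac
  obtain ⟨M, hM⟩ := hbdd a
  have hdisjoint : ∀ᶠ x in 𝓝 a, ∀ y ∈ Icc c M, y ∉ S x :=
    isCompact_Icc.eventually_forall_of_forall_eventually fun y hy =>
      hclosed.isOpen_compl.mem_nhds fun hyS =>
        (hac.trans_le hy.1).not_ge (le_csSup ⟨M, hM.self_of_nhds⟩ hyS)
  filter_upwards [hM, hdisjoint] with x hMx hx
  have hclosed_fiber : IsClosed (S x) := hclosed.preimage (Continuous.prodMk_right x)
  have hmem : sSup (S x) ∈ S x := hclosed_fiber.csSup_mem (hne x) ⟨M, hMx⟩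
  exact lt_of_not_ge fun hcx => hx _ ⟨hcx, hMx hmem⟩ hmem

theorem lowerSemicontinuous_sInf_of_isClosed_graph
    (hclosed : IsClosed {p : X × α | p.2 ∈ S p.1}) (hne : ∀ x, (S x).Nonempty)
    (hbdd : ∀ a, ∃ M, ∀ᶠ x in 𝓝 a, M ∈ lowerBounds (S x)) :
    LowerSemicontinuous fun x => sInf (S x) :=
  upperSemicontinuous_sSup_of_isClosed_graph (α := αᵒᵈ) hclosed hne hbdd

end Fibers

section VerticalDistances

variable {X : Type*} [PseudoMetricSpace X]

/-- The epigraph of `f : X → ℝ`, as a subset of the `ℓ²` product of `X` and `ℝ`; for `X = ℝⁿ` it is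
`epigraph f`. -/
def l2Epigraph (f : X → ℝ) : Set (WithLp 2 (X × ℝ)) :=
  {p | f p.fst ≤ p.snd}

/-- The heights over `x` that are equidistant from `K` and `L`; for `X = ℝⁿ` their supremum and
infimum are `Gplus K L x` and `Gminus K L x`. -/
def equidistantHeights (K L : Set (WithLp 2 (X × ℝ))) (x : X) : Set ℝ :=
  {y | infDist (toLp 2 (x, y)) K = infDist (toLp 2 (x, y)) L}

variable {K L : Set (WithLp 2 (X × ℝ))} {f : X → ℝ} {x x₀ : X} {y y₀ : ℝ}

theorem continuous_infDist_toLp (K : Set (WithLp 2 (X × ℝ))) :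
    Continuous fun p : X × ℝ => infDist (toLp 2 p) K :=
  (continuous_infDist_pt K).comp (prod_continuous_toLp 2 X ℝ)

theorem isClosed_graph_equidistantHeights (K L : Set (WithLp 2 (X × ℝ))) :
    IsClosed {p : X × ℝ | p.2 ∈ equidistantHeights K L p.1} :=
  isClosed_eq (continuous_infDist_toLp K) (continuous_infDist_toLp L)

theorem equidistantHeights_nonempty {a b : ℝ}
    (ha : infDist (toLp 2 (x, a)) K ≤ infDist (toLp 2 (x, a)) L)
    (hb : infDist (toLp 2 (x, b)) L ≤ infDist (toLp 2 (x, b)) K) :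
    (equidistantHeights K L x).Nonempty :=
  intermediate_value_univ₂ ((continuous_infDist_toLp K).comp (Continuous.prodMk_right x))
    ((continuous_infDist_toLp L).comp (Continuous.prodMk_right x)) ha hb

theorem infDist_l2Epigraph_lt_infDist (hK : IsClosed K) (hKne : K.Nonempty)
    (hdisj : Disjoint K (l2Epigraph f)) (hy : f x ≤ y) :
    infDist (toLp 2 (x, y)) (l2Epigraph f) < infDist (toLp 2 (x, y)) K := by
  have hmem : toLp 2 (x, y) ∈ l2Epigraph f := hy
  rw [infDist_zero_of_mem hmem]
  exact (hK.notMem_iff_infDist_pos hKne).mp (hdisj.notMem_of_mem_right hmem)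

theorem dist_toLp_eq_sqrt (x : X) (y : ℝ) (p : WithLp 2 (X × ℝ)) :
    dist (toLp 2 (x, y)) p = √(dist x p.fst ^ 2 + (y - p.snd) ^ 2) := by
  rw [prod_dist_eq_add (by norm_num), ENNReal.toReal_ofNat, Real.sqrt_eq_rpow]
  simp only [toLp_fst, toLp_snd, Real.rpow_two, Real.dist_eq, sq_abs]

theorem infDist_lt_infDist_of_le_snd {m r : ℝ} (hmem : toLp 2 (x₀, y₀) ∈ K) (hL : L.Nonempty)
    (hLy₀ : ∀ p ∈ L, y₀ ≤ p.snd) (hLm : ∀ p ∈ L, dist x p.fst ≤ r → m ≤ p.snd)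
    (hr : dist x x₀ < r) (hm : y₀ < m) (hdepth : dist x x₀ ^ 2 ≤ 2 * (m - y₀) * (y₀ - y)) :
    infDist (toLp 2 (x, y)) K < infDist (toLp 2 (x, y)) L := by
  have hy : y ≤ y₀ := by
    have hdepth_nonneg : 0 ≤ (m - y₀) * (y₀ - y) := by linarith [sq_nonneg (dist x x₀)]
    exact sub_nonneg.mp (nonneg_of_mul_nonneg_right hdepth_nonneg (sub_pos.mpr hm))
  have hsq_lt : dist x x₀ ^ 2 + (y - y₀) ^ 2 < min ((y - m) ^ 2) (r ^ 2 + (y - y₀) ^ 2) := by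
    have hnear : dist x x₀ ^ 2 + (y - y₀) ^ 2 < (y - m) ^ 2 := by
      nlinarith [sq_pos_of_pos (sub_pos.mpr hm)]
    have hfar : dist x x₀ ^ 2 < r ^ 2 := by gcongr
    exact lt_min hnear (by gcongr)
  have hle_sq (p) (hp : p ∈ L) :
      min ((y - m) ^ 2) (r ^ 2 + (y - y₀) ^ 2) ≤ dist x p.fst ^ 2 + (y - p.snd) ^ 2 := by
    rcases le_total (dist x p.fst) r with hpr | hpr
    · refine min_le_of_left_le (le_add_of_nonneg_of_le (sq_nonneg _) ?_)
      nlinarith [hLm p hp hpr]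
    · have hheight : (y - y₀) ^ 2 ≤ (y - p.snd) ^ 2 := by nlinarith [hLy₀ p hp]
      exact min_le_of_right_le (by gcongr; exact dist_nonneg.trans hr.le)
  calc infDist (toLp 2 (x, y)) K
      ≤ dist (toLp 2 (x, y)) (toLp 2 (x₀, y₀)) := infDist_le_dist_of_mem hmem
    _ = √(dist x x₀ ^ 2 + (y - y₀) ^ 2) := dist_toLp_eq_sqrt x y _
    _ < √(min ((y - m) ^ 2) (r ^ 2 + (y - y₀) ^ 2)) :=
        Real.sqrt_lt_sqrt (by positivity) hsq_lt
    _ ≤ infDist (toLp 2 (x, y)) L := (le_infDist hL).mpr fun p hp => by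
        rw [dist_toLp_eq_sqrt]
        exact Real.sqrt_le_sqrt (hle_sq p hp)

theorem exists_eventually_infDist_lt_infDist_l2Epigraph [ProperSpace X]
    (hf : LowerSemicontinuous f) (hlt : ∀ x, y₀ < f x) (hmem : toLp 2 (x₀, y₀) ∈ K) (a : X) :
    ∃ M, ∀ᶠ x in 𝓝 a, ∀ y ≤ M,
      infDist (toLp 2 (x, y)) K < infDist (toLp 2 (x, y)) (l2Epigraph f) := by
  set r := dist a x₀ + 1
  have hr : 0 ≤ r + 1 := by positivity
  obtain ⟨z, -, hz⟩ := (hf.lowerSemicontinuousOn _).exists_isMinOn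
    ⟨a, mem_closedBall_self hr⟩ (isCompact_closedBall a (r + 1))
  have hδ : 0 < 2 * (f z - y₀) := by linarith [hlt z]
  refine ⟨y₀ - r ^ 2 / (2 * (f z - y₀)), ?_⟩
  filter_upwards [ball_mem_nhds a one_pos] with x hxa y hy
  rw [mem_ball] at hxa
  have hxr : dist x x₀ < r := by linarith [dist_triangle x a x₀]
  have hdepth : r ^ 2 / (2 * (f z - y₀)) ≤ y₀ - y := by linarith
  refine infDist_lt_infDist_of_le_snd hmem ⟨toLp 2 (x, f x), le_refl (f x)⟩
    (fun p hp => (hlt p.fst).le.trans hp) (fun p hp hpr => le_trans (hz ?_) hp) hxr (hlt z) ?_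
  · rw [mem_closedBall]
    linarith [dist_triangle_left p.fst a x]
  · calc dist x x₀ ^ 2 ≤ r ^ 2 := by gcongr
      _ ≤ 2 * (f z - y₀) * (y₀ - y) := (div_le_iff₀' hδ).mp hdepth

end VerticalDistances

theorem stmt4_general {X : Type*} [PseudoMetricSpace X] [ProperSpace X] {f : X → ℝ}
    (hf : LowerSemicontinuous f) (hbdd : ∀ x, IsBoundedUnder (· ≤ ·) (𝓝 x) f)
    {K : Set (WithLp 2 (X × ℝ))} (hK : IsClosed K) (hdisj : Disjoint K (l2Epigraph f))
    {x₀ : X} {y₀ : ℝ} (hmem : toLp 2 (x₀, y₀) ∈ K) (hlt : ∀ x, y₀ < f x) :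
    UpperSemicontinuous (fun x => sSup (equidistantHeights K (l2Epigraph f) x)) ∧
      LowerSemicontinuous (fun x => sInf (equidistantHeights K (l2Epigraph f) x)) := by
  have habove {x y} (hy : f x ≤ y) :
      infDist (toLp 2 (x, y)) (l2Epigraph f) < infDist (toLp 2 (x, y)) K :=
    infDist_l2Epigraph_lt_infDist hK ⟨_, hmem⟩ hdisj hy
  have hbelow := exists_eventually_infDist_lt_infDist_l2Epigraph hf hlt hmem
  have hclosed := isClosed_graph_equidistantHeights K (l2Epigraph f)
  have hne (x) : (equidistantHeights K (l2Epigraph f) x).Nonempty := by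
    obtain ⟨M, hM⟩ := hbelow x
    exact equidistantHeights_nonempty (hM.self_of_nhds M le_rfl).le (habove le_rfl).le
  refine ⟨upperSemicontinuous_sSup_of_isClosed_graph hclosed hne fun a => ?_,
    lowerSemicontinuous_sInf_of_isClosed_graph hclosed hne fun a => ?_⟩
  · obtain ⟨M, hM⟩ := (hbdd a).eventually_le
    refine ⟨M, hM.mono fun x hx y hy => ?_⟩
    exact le_of_not_ge fun hMy => (habove (hx.trans hMy)).ne' hy
  · obtain ⟨M, hM⟩ := hbelow a
    exact ⟨M, hM.mono fun x hx y hy => le_of_not_ge fun hyM => (hx y hyM).ne hy⟩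

theorem stmt4 {n : ℕ} (f : EuclideanSpace ℝ (Fin n) → ℝ) (hf : Continuous f)
    (hfpos : ∀ x, 0 < f x)
    (L : Set (EucProd n)) (hL : L = epigraph f)
    (K : Set (EucProd n)) (hKcl : IsClosed K) (hKne : K.Nonempty)
    (hdisj : K ∩ L = ∅)
    (x₀ : EuclideanSpace ℝ (Fin n)) (y₀ : ℝ) (hx₀ : pt x₀ y₀ ∈ K) (hy₀ : y₀ ≤ 0) :
    UpperSemicontinuous (Gplus K L) ∧ LowerSemicontinuous (Gminus K L) := by
  subst hL
  exact stmt4_general hf.lowerSemicontinuous (fun x => hf.continuousAt.isBoundedUnder_le) hKcl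
    (disjoint_iff_inter_eq_empty.mpr hdisj) hx₀ fun x => hy₀.trans_lt (hfpos x)

end
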